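/- arXiv:1808.06182 — 2 statements merged into one kernel-verified Lean document; each statement's English description precedes it below -/
import Mathlib

section
/- There exists a constant K > 1 such that the following holds. Let G be a C₄-free graph on n vertices with minimum degree at least d − 1. Then the number of ways to add a new vertex of degree d to G so that the resulting graph is C₄-free (equivalently, the number of d-element vertex subsets W of G such that no two distinct vertices of W have a common neighbour in G) is at most 2^{K·n^{1/2}}. -/
open scoped Classical

/-- A graph is `C₄`-free if it contains no cycle of length 4. -/
def C4Free {V : Type*} (G : SimpleGraph V) : Prop :=
  ¬ ∃ a b c d : V, a ≠ b ∧ a ≠ c ∧ a ≠ d ∧ b ≠ c ∧ b ≠ d ∧ c ≠ d ∧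
    G.Adj a b ∧ G.Adj b c ∧ G.Adj c d ∧ G.Adj d a

noncomputable def kwF {n : ℕ} (r : Fin n → Fin n → Prop) (x : ℝ) (W : Finset (Fin n)) : ℝ :=
  if (∀ a ∈ W, ∀ b ∈ W, a ≠ b → ¬ r a b) then x ^ W.card else 0

lemma kwF_nonneg {n : ℕ} (r : Fin n → Fin n → Prop) (x : ℝ) (hx : 0 ≤ x) (W : Finset (Fin n)) :
    0 ≤ kwF r x W := by
  unfold kwF; split_ifs <;> positivity

lemma kwF_le {n : ℕ} (r : Fin n → Fin n → Prop) (x : ℝ) (hx : 0 ≤ x) (W : Finset (Fin n)) :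
    kwF r x W ≤ x ^ W.card := by
  unfold kwF; split_ifs
  · exact le_rfl
  · positivity

lemma kw_small {n : ℕ} (r : Fin n → Fin n → Prop) (x R : ℝ) (hx : 0 ≤ x) (A : Finset (Fin n))
    (hA : (A.card : ℝ) ≤ R) : ∑ W ∈ A.powerset, kwF r x W ≤ Real.exp (x * R) := by
  calc ∑ W ∈ A.powerset, kwF r x W ≤ ∑ W ∈ A.powerset, x ^ W.card :=
        Finset.sum_le_sum fun W _ => kwF_le r x hx W
    _ = (x + 1) ^ A.card := by
        rw [← Finset.sum_pow_mul_eq_add_pow]; simp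
    _ ≤ (Real.exp x) ^ A.card := by
        gcongr; exact Real.add_one_le_exp x
    _ = Real.exp (x * A.card) := by rw [← Real.exp_nat_mul, mul_comm]
    _ ≤ _ := by gcongr

lemma kw_step {n : ℕ} (r : Fin n → Fin n → Prop) (x : ℝ) (hx : 0 ≤ x) (hx1 : x ≤ 1)
    (A : Finset (Fin n)) (v : Fin n) (hv : v ∈ A) :
    ∑ W ∈ A.powerset, kwF r x W ≤ ∑ W ∈ (A.erase v).powerset, kwF r x W +
      ∑ W ∈ ((A.erase v).filter (fun u => ¬ r v u)).powerset, kwF r x W := by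
  conv_lhs => rw [← Finset.insert_erase hv]
  rw [Finset.sum_powerset_insert (Finset.notMem_erase v A)]
  refine add_le_add le_rfl ?_
  rw [← Finset.sum_subset (s₁ := ((A.erase v).filter (fun u => ¬ r v u)).powerset)
    (s₂ := (A.erase v).powerset) (f := fun t => kwF r x (insert v t))]
  · apply Finset.sum_le_sum
    intro W hW
    have hvW : v ∉ W := by
      intro h
      have := Finset.mem_powerset.1 hW h
      simp at this
    unfold kwF
    by_cases h : ∀ a ∈ W, ∀ b ∈ W, a ≠ b → ¬ r a b
    · rw [if_pos h]
      split_ifs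
      · rw [Finset.card_insert_of_notMem hvW]
        exact pow_le_pow_of_le_one hx hx1 (Nat.le_succ _)
      · positivity
    · rw [if_neg h, if_neg]
      intro h'
      exact h fun a ha b hb => h' a (Finset.mem_insert_of_mem ha) b (Finset.mem_insert_of_mem hb)
  · exact Finset.powerset_mono.2 (Finset.filter_subset _ _)
  · intro W hW hW'
    unfold kwF
    rw [if_neg]
    intro h
    apply hW'
    rw [Finset.mem_powerset] at hW ⊢
    intro u hu
    have h1 := hW hu
    rw [Finset.mem_filter]
    refine ⟨h1, h v (Finset.mem_insert_self _ _) u (Finset.mem_insert_of_mem hu) ?_⟩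
    exact (Finset.ne_of_mem_erase h1).symm

lemma kw_main {n : ℕ} (r : Fin n → Fin n → Prop) (β R x : ℝ) (hβ : β ≤ 1) (hx : 0 ≤ x)
    (hx1 : x ≤ 1)
    (h : ∀ A : Finset (Fin n), R < A.card → ∃ v ∈ A, β * A.card ≤ ((A.filter (r v)).card : ℝ)) :
    ∀ (m : ℕ) (A : Finset (Fin n)), A.card = m → ∀ q : ℕ, (A.card : ℝ) * (1 - β) ^ q ≤ R →
      ∑ W ∈ A.powerset, kwF r x W ≤ ((A.card : ℝ) + 1) ^ q * Real.exp (x * R) := by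
  intro m
  induction m using Nat.strong_induction_on with
  | _ m ih =>
  intro A hAm q hq
  have hβ' : 0 ≤ 1 - β := by linarith
  by_cases hA : (A.card : ℝ) ≤ R
  · refine (kw_small r x R hx A hA).trans ?_
    apply le_mul_of_one_le_left (Real.exp_pos _).le
    apply one_le_pow₀
    have : (0:ℝ) ≤ A.card := by positivity
    linarith
  push Not at hA
  obtain ⟨v, hv, hd⟩ := h A hA
  rcases q with _ | q
  · simp at hq; linarith
  have hc : (A.erase v).card + 1 = A.card := Finset.card_erase_add_one hv
  have hcR : ((A.erase v).card : ℝ) + 1 = A.card := by exact_mod_cast hc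
  set A' := (A.erase v).filter (fun u => ¬ r v u) with hA'
  have hc' : A'.card ≤ (A.erase v).card := Finset.card_filter_le _ _
  have hc'R : (A'.card : ℝ) ≤ (A.erase v).card := by exact_mod_cast hc'
  have hc2 : (A'.card : ℝ) ≤ A.card * (1 - β) := by
    have h1 : A'.card ≤ (A.filter (fun u => ¬ r v u)).card :=
      Finset.card_le_card (Finset.filter_subset_filter _ (Finset.erase_subset _ _))
    have h2 := Finset.card_filter_add_card_filter_not (s := A) (r v)
    have h1' : (A'.card : ℝ) ≤ ((A.filter (fun u => ¬ r v u)).card : ℝ) := by exact_mod_cast h1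
    have h2' : ((A.filter (r v)).card : ℝ) + ((A.filter (fun u => ¬ r v u)).card : ℝ) = A.card := by
      exact_mod_cast h2
    linarith
  have i1 := ih (A.erase v).card (by omega) (A.erase v) rfl (q+1) (by
    refine le_trans ?_ hq
    gcongr
    exact Finset.erase_subset _ _)
  have i2 := ih A'.card (by omega) A' rfl q (by
    refine le_trans ?_ hq
    rw [pow_succ', ← mul_assoc]
    gcongr)
  refine (kw_step r x hx hx1 A v hv).trans ((add_le_add i1 i2).trans ?_)
  rw [← add_mul]
  gcongr
  rw [hcR]
  have : ((A'.card : ℝ) + 1) ^ q ≤ (A.card : ℝ) ^ q := by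
    gcongr; linarith
  have h3 : (A.card : ℝ) ^ q ≤ ((A.card : ℝ) + 1) ^ q := by gcongr; linarith
  have h0 : (0:ℝ) ≤ A.card := by positivity
  calc _ ≤ (A.card : ℝ) ^ (q+1) + (A.card : ℝ) ^ q := by gcongr
    _ = (A.card + 1) * (A.card : ℝ) ^ q := by ring
    _ ≤ (A.card + 1) * ((A.card : ℝ) + 1) ^ q := by gcongr
    _ = _ := by ring

def kwR {n : ℕ} (G : SimpleGraph (Fin n)) (a b : Fin n) : Prop :=
  a ≠ b ∧ ∃ c, G.Adj a c ∧ G.Adj b c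

lemma kw_degree {n : ℕ} (hn : 0 < n) (G : SimpleGraph (Fin n)) (hG : C4Free G) (D : ℕ)
    (hD : 0 < D)
    (hdeg : ∀ v, D ≤ G.degree v) (A : Finset (Fin n)) (hA : 2 * (n:ℝ) / D < A.card) :
    ∃ v ∈ A, (D:ℝ)^2 / (2 * n) * A.card ≤ ((A.filter (kwR G v)).card : ℝ) := by
  by_contra hcon
  push Not at hcon
  have hn' : (0:ℝ) < n := by exact_mod_cast hn
  have hD' : (0:ℝ) < D := by exact_mod_cast hD
  have hApos : (0:ℝ) < A.card := lt_trans (by positivity) hA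
  have hAne : A.Nonempty := by
    rw [← Finset.card_pos]; exact_mod_cast hApos
  have hlt : ∑ v ∈ A, ((A.filter (kwR G v)).card : ℝ) <
      A.card * ((D:ℝ)^2 / (2 * n) * A.card) := by
    rw [← nsmul_eq_mul, ← Finset.sum_const]
    exact Finset.sum_lt_sum_of_nonempty hAne hcon
  let B : Fin n → Finset (Fin n) := fun c => A.filter (fun v => G.Adj v c)
  have hsum : ∑ c, (B c).offDiag.card ≤ ∑ v ∈ A, (A.filter (kwR G v)).card := by
    rw [← Finset.card_biUnion, ← Finset.card_sigma]
    · apply Finset.card_le_card_of_injOn (fun p => (⟨p.1, p.2⟩ : (_ : Fin n) × Fin n))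
      · intro p hp
        simp only [B, Finset.coe_biUnion, Set.mem_iUnion, Finset.mem_coe, Finset.mem_offDiag,
          Finset.mem_filter, Finset.mem_univ] at hp
        obtain ⟨c, -, ⟨h1, h2⟩, ⟨h3, h4⟩, h5⟩ := hp
        simp only [Finset.coe_sigma, Finset.mem_coe, Set.mem_sigma_iff, Finset.mem_filter]
        exact ⟨h1, h3, h5, c, h2, h4⟩
      · intro p _ p' _ h
        simp at h
        exact Prod.ext h.1 h.2
    · intro c _ c' _ hcc
      rw [Function.onFun, Finset.disjoint_left]
      intro p hp hp'
      simp only [B, Finset.mem_offDiag, Finset.mem_filter] at hp hp'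
      obtain ⟨⟨h1, h2⟩, ⟨h3, h4⟩, h5⟩ := hp
      obtain ⟨⟨-, h2'⟩, ⟨-, h4'⟩, -⟩ := hp'
      exact hG ⟨p.1, c, p.2, c', h2.ne, h5, h2'.ne, h4.ne.symm, hcc, h4'.ne,
        h2, h4.symm, h4', h2'.symm⟩
  have hS : A.card * D ≤ ∑ c, (B c).card := by
    have : ∑ c, (B c).card = ∑ v ∈ A, G.degree v := by
      have := Finset.sum_card_bipartiteAbove_eq_sum_card_bipartiteBelow
        (s := A) (t := (Finset.univ : Finset (Fin n))) G.Adj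
      simp only [Finset.bipartiteAbove, Finset.bipartiteBelow] at this
      rw [← this]
      apply Finset.sum_congr rfl
      intro v _
      rw [← SimpleGraph.card_neighborFinset_eq_degree]
      congr 1
      ext c
      simp
    rw [this, ← smul_eq_mul, ← Finset.sum_const]
    exact Finset.sum_le_sum fun v _ => hdeg v
  have hoff : ∀ c, ((B c).offDiag.card : ℝ) = ((B c).card : ℝ)^2 - (B c).card := by
    intro c
    rw [Finset.offDiag_card, Nat.cast_sub (Nat.le_mul_self _)]
    push_cast; ring
  have hCS : (∑ c, ((B c).card : ℝ))^2 ≤ n * ∑ c, ((B c).card : ℝ)^2 := by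
    have := sq_sum_le_card_mul_sum_sq (s := (Finset.univ : Finset (Fin n)))
      (f := fun c => ((B c).card : ℝ))
    simpa using this
  set S : ℝ := ∑ c, ((B c).card : ℝ) with hSdef
  have hS' : (A.card : ℝ) * D ≤ S := by rw [hSdef]; exact_mod_cast hS
  have hsum' : (∑ c, ((B c).card : ℝ)^2) - S ≤ ∑ v ∈ A, ((A.filter (kwR G v)).card : ℝ) := by
    rw [hSdef, ← Finset.sum_sub_distrib]
    simp_rw [← hoff]
    exact_mod_cast hsum
  have h2n : 2 * (n:ℝ) < A.card * D := by rwa [div_lt_iff₀ hD'] at hA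
  have hfin : (∑ c, ((B c).card : ℝ)^2) - S < A.card * ((D:ℝ)^2 / (2 * n) * A.card) :=
    lt_of_le_of_lt hsum' hlt
  have e : A.card * ((D:ℝ)^2 / (2 * n) * A.card) * (2 * n) = (A.card * D : ℝ)^2 := by
    field_simp
  have h5 := mul_lt_mul_of_pos_right hfin (show (0:ℝ) < 2 * n by positivity)
  rw [e] at h5
  have h6 : (A.card * D : ℝ)^2 ≤ S^2 := by gcongr
  nlinarith

lemma kw_disj {n : ℕ} (G : SimpleGraph (Fin n)) (D : ℕ) (hdeg : ∀ v, D ≤ G.degree v)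
    (W : Finset (Fin n))
    (hW : ∀ a ∈ W, ∀ b ∈ W, a ≠ b → ∀ c : Fin n, ¬ (G.Adj a c ∧ G.Adj b c)) :
    W.card * D ≤ n := by
  have h1 : (W.biUnion (fun v => G.neighborFinset v)).card = ∑ v ∈ W, G.degree v := by
    rw [Finset.card_biUnion]
    · simp
    · intro a ha b hb hab
      rw [Function.onFun, Finset.disjoint_left]
      intro c hc hc'
      simp at hc hc'
      exact hW a ha b hb hab c ⟨hc, hc'⟩
  calc W.card * D = ∑ v ∈ W, D := by simp
    _ ≤ ∑ v ∈ W, G.degree v := Finset.sum_le_sum fun v _ => hdeg v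
    _ = _ := h1.symm
    _ ≤ n := by simpa using Finset.card_le_univ (W.biUnion (fun v => G.neighborFinset v))

lemma kw_log (n : ℕ) (hn : 0 < n) : Real.log ((n:ℝ) + 1) ^ 4 ≤ 8192 * Real.sqrt n := by
  have hn' : (1:ℝ) ≤ n := by exact_mod_cast hn
  have h := Real.log_le_rpow_div (x := (n:ℝ) + 1) (by positivity) (ε := 1/8) (by norm_num)
  have h0 : 0 ≤ Real.log ((n:ℝ) + 1) := Real.log_nonneg (by linarith)
  calc Real.log ((n:ℝ) + 1) ^ 4 ≤ (((n:ℝ)+1) ^ ((1:ℝ)/8) / (1/8)) ^ 4 := by gcongr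
    _ = 4096 * (((n:ℝ)+1) ^ ((1:ℝ)/8)) ^ 4 := by ring
    _ = 4096 * Real.sqrt (n+1) := by
        rw [← Real.rpow_natCast, ← Real.rpow_mul (by positivity), Real.sqrt_eq_rpow]
        norm_num
    _ ≤ 4096 * (2 * Real.sqrt n) := by
        gcongr
        rw [Real.sqrt_le_left (by positivity), mul_pow, Real.sq_sqrt (by positivity)]
        linarith
    _ = _ := by ring

lemma kw_exp (n d : ℕ) (hn : 0 < n) (G : SimpleGraph (Fin n)) (hG : C4Free G)
    (hdeg : ∀ v : Fin n, d - 1 ≤ G.degree v) :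
    (((Finset.univ : Finset (Fin n)).powerset.filter
          (fun W => W.card = d ∧ ∀ a ∈ W, ∀ b ∈ W, a ≠ b →
            ∀ c : Fin n, ¬ (G.Adj a c ∧ G.Adj b c))).card : ℝ)
        ≤ Real.exp (40000 * Real.sqrt n) := by
  set F := ((Finset.univ : Finset (Fin n)).powerset.filter
          (fun W => W.card = d ∧ ∀ a ∈ W, ∀ b ∈ W, a ≠ b →
            ∀ c : Fin n, ¬ (G.Adj a c ∧ G.Adj b c))) with hF
  have hn' : (1:ℝ) ≤ n := by exact_mod_cast hn
  set s := Real.sqrt n with hs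
  have hs1 : 1 ≤ s := by rw [hs]; exact Real.one_le_sqrt.2 hn'
  have hss : s * s = n := Real.mul_self_sqrt (by positivity)
  set L := Real.log ((n:ℝ) + 1) with hL
  have hL0 : 0 ≤ L := Real.log_nonneg (by linarith)
  have hL4 : L ^ 4 ≤ 8192 * s := kw_log n hn
  have hLL : L ≤ L ^ 4 + 1 := by nlinarith [sq_nonneg (L^2 - 1/2), sq_nonneg (L - 1/2)]
  have hexpL : Real.exp L = n + 1 := Real.exp_log (by positivity)
  have htriv : (F.card : ℝ) ≤ Real.exp (d * L) := by
    have h1 : F ⊆ (Finset.univ : Finset (Fin n)).powersetCard d := by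
      intro W hW
      simp only [hF, Finset.mem_filter] at hW
      simp [Finset.mem_powersetCard, hW.2.1]
    have h2 : F.card ≤ n.choose d := by
      have := Finset.card_le_card h1
      simpa using this
    have h3 : F.card ≤ n ^ d := h2.trans (Nat.choose_le_pow n d)
    rw [Real.exp_nat_mul, hexpL]
    calc (F.card : ℝ) ≤ (n:ℝ)^d := by exact_mod_cast h3
      _ ≤ _ := by gcongr; linarith
  rcases Nat.lt_or_ge d 2 with hd | hd
  · refine htriv.trans (Real.exp_le_exp.2 ?_)
    have : (d:ℝ) ≤ 1 := by exact_mod_cast (by omega : d ≤ 1)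
    nlinarith
  obtain ⟨D, rfl⟩ : ∃ D, d = D + 1 := ⟨d - 1, by omega⟩
  have hD : 1 ≤ D := by omega
  simp only [Nat.add_sub_cancel] at hdeg
  have hD' : (1:ℝ) ≤ D := by exact_mod_cast hD
  by_cases hcase : D * L ≤ s
  · refine htriv.trans (Real.exp_le_exp.2 ?_)
    push_cast
    nlinarith
  push Not at hcase
  rcases F.eq_empty_or_nonempty with hFe | ⟨W₀, hW₀⟩
  · rw [hFe]; simp; positivity
  have hDs : (D:ℝ) ≤ s := by
    have hW := (Finset.mem_filter.1 hW₀).2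
    have h1 := kw_disj G D hdeg W₀ hW.2
    rw [hW.1] at h1
    rw [hs]
    apply Real.le_sqrt_of_sq_le
    have : ((D:ℝ)+1) * D ≤ n := by exact_mod_cast h1
    nlinarith
  set x : ℝ := D / s with hx
  set R : ℝ := 2 * n / D with hR
  set β : ℝ := (D:ℝ)^2 / (2 * n) with hβ
  have hx0 : 0 < x := by positivity
  have hx1 : x ≤ 1 := by rw [hx, div_le_one (by positivity)]; exact hDs
  have hβ0 : 0 < β := by positivity
  have hβ1 : β ≤ 1 := by
    rw [hβ, div_le_one (by positivity)]
    nlinarith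
  have hxR : x * R = 2 * s := by
    rw [hx, hR, ← hss]; field_simp
  set q : ℕ := ⌈L / β⌉₊ with hq
  have hq1 : L / β ≤ q := Nat.le_ceil _
  have hq2 : (q:ℝ) < L / β + 1 := Nat.ceil_lt_add_one (by positivity)
  have hinv : 1 / β ≤ 2 * L ^ 2 := by
    rw [hβ, one_div_div, div_le_iff₀ (by positivity), ← hss]
    have : s * s ≤ (D * L) * (D * L) := by gcongr
    nlinarith
  have hqL : q * L ≤ 2 * L ^ 4 + L := by
    have h1 : (q:ℝ) ≤ 2 * L ^ 3 + 1 := by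
      have : L / β ≤ 2 * L ^ 3 := by
        calc L / β = L * (1 / β) := by ring
          _ ≤ L * (2 * L^2) := by gcongr
          _ = _ := by ring
      linarith
    calc q * L ≤ (2 * L^3 + 1) * L := by gcongr
      _ = _ := by ring
  have hcond : (n:ℝ) * (1 - β) ^ q ≤ R := by
    have h1 : (1 - β) ^ q ≤ Real.exp (-L) := by
      calc (1 - β) ^ q ≤ (Real.exp (-β)) ^ q := by
            exact pow_le_pow_left₀ (by linarith) (Real.one_sub_le_exp_neg β) q
        _ = Real.exp (-(q * β)) := by rw [← Real.exp_nat_mul]; congr 1; ring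
        _ ≤ _ := by
            apply Real.exp_le_exp.2
            rw [div_le_iff₀ hβ0] at hq1
            linarith
    rw [Real.exp_neg, hexpL] at h1
    calc (n:ℝ) * (1 - β) ^ q ≤ n * (n + 1 : ℝ)⁻¹ := by gcongr
      _ ≤ 1 := by rw [← div_eq_mul_inv, div_le_one (by positivity)]; linarith
      _ ≤ R := by
        rw [hR, le_div_iff₀ (by positivity)]
        nlinarith
  have hmain := kw_main (kwR G) β R x hβ1 hx0.le hx1
    (fun A hA => kw_degree hn G hG D hD hdeg A hA) _ Finset.univ rfl q
    (by simpa using hcond)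
  have hcount : (F.card : ℝ) * x ^ (D+1) ≤ ∑ W ∈ (Finset.univ : Finset (Fin n)).powerset,
      kwF (kwR G) x W := by
    rw [← nsmul_eq_mul, ← Finset.sum_const]
    calc ∑ W ∈ F, x ^ (D+1) ≤ ∑ W ∈ F, kwF (kwR G) x W := by
          apply Finset.sum_le_sum
          intro W hW
          have hW := (Finset.mem_filter.1 hW).2
          unfold kwF
          rw [if_pos, hW.1]
          rintro a ha b hb hab ⟨-, c, hc⟩
          exact hW.2 a ha b hb hab c hc
      _ ≤ _ := Finset.sum_le_sum_of_subset_of_nonneg (Finset.filter_subset _ _)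
          fun W _ _ => kwF_nonneg _ _ hx0.le W
  have hxinv : Real.exp (-(2 * s)) ≤ x ^ (D+1) := by
    have h1 : Real.exp (-(s / D)) ≤ x := by
      rw [Real.exp_neg]
      have : s / D ≤ Real.exp (s / D) := by linarith [Real.add_one_le_exp (s / D)]
      calc (Real.exp (s / D))⁻¹ ≤ (s / D)⁻¹ := by gcongr
        _ = x := by rw [hx, inv_div]
    calc Real.exp (-(2 * s)) ≤ Real.exp (-(s / D)) ^ (D+1) := by
          rw [← Real.exp_nat_mul]
          apply Real.exp_le_exp.2
          push_cast
          have : ((D:ℝ)+1) * (s / D) ≤ 2 * s := by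
            rw [← mul_div_assoc, div_le_iff₀ (by positivity)]
            nlinarith
          linarith
      _ ≤ _ := by gcongr
  have hfin : (F.card : ℝ) * Real.exp (-(2*s)) ≤ Real.exp (q * L) * Real.exp (2 * s) := by
    calc (F.card : ℝ) * Real.exp (-(2*s)) ≤ F.card * x ^ (D+1) := by gcongr
      _ ≤ _ := hcount
      _ ≤ _ := hmain
      _ = _ := by rw [Real.exp_nat_mul, hexpL, hxR]; simp
  rw [Real.exp_neg, ← div_eq_mul_inv, div_le_iff₀ (Real.exp_pos _), ← Real.exp_add,
    ← Real.exp_add] at hfin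
  refine hfin.trans (Real.exp_le_exp.2 ?_)
  linarith

theorem kleitman_winston_extension :
    ∃ K : ℝ, 1 < K ∧
      ∀ (n d : ℕ) (G : SimpleGraph (Fin n)), C4Free G →
        (∀ v : Fin n, d - 1 ≤ G.degree v) →
        (((Finset.univ : Finset (Fin n)).powerset.filter
          (fun W => W.card = d ∧ ∀ a ∈ W, ∀ b ∈ W, a ≠ b →
            ∀ c : Fin n, ¬ (G.Adj a c ∧ G.Adj b c))).card : ℝ)
        ≤ 2 ^ (K * (n : ℝ) ^ ((1 : ℝ)/2)) := by
  refine ⟨80000, by norm_num, ?_⟩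
  intro n d G hG hdeg
  rcases Nat.eq_zero_or_pos n with rfl | hn
  · have h : (((Finset.univ : Finset (Fin 0)).powerset.filter
          (fun W => W.card = d ∧ ∀ a ∈ W, ∀ b ∈ W, a ≠ b →
            ∀ c : Fin 0, ¬ (G.Adj a c ∧ G.Adj b c))).card) ≤ 1 := by
      refine (Finset.card_filter_le _ _).trans ?_
      simp
    rw [Nat.cast_zero, Real.zero_rpow (by norm_num), mul_zero, Real.rpow_zero]
    exact_mod_cast h
  · refine (kw_exp n d hn G hG hdeg).trans ?_
    rw [← Real.sqrt_eq_rpow, Real.rpow_def_of_pos (by norm_num)]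
    apply Real.exp_le_exp.2
    have := Real.log_two_gt_d9
    have h0 := Real.sqrt_nonneg (n:ℝ)
    nlinarith
end

section
/- There exist constants c₁, c₂ > 0 such that for every integer n ≥ 3, c₁/log n ≤ ∏_{p prime, p < n}(1 − 1/p) ≤ c₂/log n, where log denotes the natural logarithm. -/
lemma aux_zeta {s : ℝ} (hs : 1 < s) : ∑' n : ℕ, 1 / (n : ℝ) ^ s ≤ 1 + 1 / (s - 1) := by
  have h := ZetaAsymptotics.zeta_limit_aux1 hs
  have h2 : 0 ≤ ZetaAsymptotics.termTSum s := tsum_nonneg fun n => ZetaAsymptotics.term_nonneg _ _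
  have h3 : ∑' n : ℕ, 1 / (n : ℝ) ^ s = ∑' n : ℕ, 1 / ((n : ℝ) + 1) ^ s := by
    rw [(Real.summable_one_div_nat_rpow.mpr hs).tsum_eq_zero_add]
    simp [Real.zero_rpow (by linarith : s ≠ 0)]
  rw [h3]
  have : 0 ≤ s * ZetaAsymptotics.termTSum s := by positivity
  linarith

/-- The completely multiplicative function `n ↦ n ^ (-s)`. -/
noncomputable def auxHom (s : ℝ) : ℕ →* ℝ where
  toFun n := 1 / (n : ℝ) ^ s
  map_one' := by simp
  map_mul' m n := by
    push_cast
    rw [Real.mul_rpow (by positivity) (by positivity), one_div_mul_one_div]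

lemma auxHom_apply (s : ℝ) (n : ℕ) : auxHom s n = 1 / (n : ℝ) ^ s := rfl

lemma aux_euler {s : ℝ} (hs : 1 < s) (n : ℕ) :
    ∏ p ∈ n.primesBelow, (1 - 1 / (p : ℝ) ^ s)⁻¹ ≤ 1 + 1 / (s - 1) := by
  have hsum : Summable (auxHom s) := Real.summable_one_div_nat_rpow.mpr hs
  have h := EulerProduct.prod_primesBelow_geometric_eq_tsum_smoothNumbers hsum n
  simp only [auxHom_apply] at h
  rw [h]
  refine le_trans ?_ (aux_zeta hs)
  exact Summable.tsum_subtype_le (fun n : ℕ => 1 / (n : ℝ) ^ s) _ (fun _ => by positivity) hsum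

lemma aux_harm (n : ℕ) (hn : 1 ≤ n) :
    Real.log n ≤ ∏ p ∈ n.primesBelow, (1 - 1 / (p : ℝ))⁻¹ := by
  have h := EulerProduct.summable_and_hasSum_smoothNumbers_prod_primesBelow_geometric
    (f := auxHom 1) (fun {p} hp => by
      have : (1 : ℝ) < p := by exact_mod_cast hp.one_lt
      rw [auxHom_apply, Real.rpow_one, Real.norm_of_nonneg (by positivity), div_lt_one] <;> linarith) n
  simp only [auxHom_apply, Real.rpow_one] at h
  have h1 := log_add_one_le_harmonic (n - 1)
  rw [Nat.sub_add_cancel hn] at h1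
  refine h1.trans ?_
  rw [harmonic_eq_sum_Icc]
  push_cast
  have h2 := sum_le_hasSum ((Finset.Icc 1 (n - 1)).subtype (· ∈ n.smoothNumbers))
    (fun _ _ => by positivity) h.2
  refine le_trans (le_of_eq ?_) h2
  rw [Finset.sum_subtype_of_mem (fun m : ℕ => 1 / (m : ℝ))]
  · simp
  · intro m hm
    rw [Finset.mem_Icc] at hm
    exact Nat.mem_smoothNumbers_of_lt (by omega) (by omega)

lemma aux_mertens1 (n : ℕ) (hn : 1 ≤ n) :
    ∑ p ∈ n.primesBelow, Real.log p / p ≤ Real.log n + Real.log 4 := by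
  have hn0 : (0 : ℝ) < n := by exact_mod_cast hn
  have hfac : ∑ p ∈ n.primesBelow, ((n / p : ℕ) : ℝ) * Real.log p ≤ n * Real.log n := by
    have h1 : Real.log (n.factorial) ≤ n * Real.log n := by
      rw [← Real.log_pow]
      apply Real.log_le_log (by exact_mod_cast n.factorial_pos)
      exact_mod_cast n.factorial_le_pow
    refine le_trans ?_ h1
    rw [Real.log_nat_eq_sum_factorization, Finsupp.sum]
    have hsub : n.primesBelow ⊆ n.factorial.factorization.support := by
      intro p hp
      rw [Nat.mem_primesBelow] at hp
      rw [Nat.support_factorization, Nat.mem_primeFactors]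
      exact ⟨hp.2, hp.2.dvd_factorial.mpr hp.1.le, n.factorial_ne_zero⟩
    refine le_trans ?_ (Finset.sum_le_sum_of_subset_of_nonneg hsub fun p _ _ => by positivity)
    refine Finset.sum_le_sum fun p hp => ?_
    rw [Nat.mem_primesBelow] at hp
    refine mul_le_mul_of_nonneg_right ?_ (Real.log_natCast_nonneg p)
    have hl : Nat.log p n < Nat.log p n + 2 := by omega
    rw [Nat.factorization_factorial hp.2 hl]
    have := Finset.single_le_sum (f := fun i => n / p ^ i) (s := Finset.Ico 1 (Nat.log p n + 2))
      (fun _ _ => Nat.zero_le _) (a := 1) (by simp)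
    simp only [pow_one] at this
    exact_mod_cast this
  have hth : ∑ p ∈ n.primesBelow, Real.log p ≤ Real.log 4 * n := by
    refine le_trans ?_ (Chebyshev.theta_le_log4_mul_x hn0.le)
    rw [Chebyshev.theta_eq_sum_primesLE_log]
    refine Finset.sum_le_sum_of_subset_of_nonneg ?_ fun p _ _ => Real.log_natCast_nonneg p
    intro p hp
    rw [Nat.mem_primesBelow] at hp
    rw [Nat.primesLE, Nat.mem_primesBelow]
    exact ⟨by omega, hp.2⟩
  have hkey : n * ∑ p ∈ n.primesBelow, Real.log p / p ≤
      ∑ p ∈ n.primesBelow, (((n / p : ℕ) : ℝ) * Real.log p + Real.log p) := by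
    rw [Finset.mul_sum]
    refine Finset.sum_le_sum fun p hp => ?_
    have h1 : (n : ℝ) / p ≤ ((n / p : ℕ) : ℝ) + 1 := by
      have := (Nat.lt_floor_add_one ((n : ℝ) / p)).le
      rwa [Nat.floor_div_eq_div] at this
    have := mul_le_mul_of_nonneg_right h1 (Real.log_natCast_nonneg p)
    calc _ = (n : ℝ) / p * Real.log p := by ring
      _ ≤ _ := this
      _ = _ := by ring
  rw [Finset.sum_add_distrib] at hkey
  nlinarith

lemma aux_term {L p : ℝ} (hL : 0 < L) (hp : 2 ≤ p) :
    1 - 1 / p ^ (1 + 1 / L) ≤ (1 - 1 / p) * Real.exp (2 / L * (Real.log p / p)) := by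
  have hp0 : 0 < p := by linarith
  have h1 : 1 / p ^ (1 + 1 / L) = 1 / p * Real.exp (-(Real.log p / L)) := by
    rw [Real.rpow_add hp0, Real.rpow_one, Real.rpow_def_of_pos hp0, Real.exp_neg]
    field_simp
  have h2 : 1 - Real.log p / L ≤ Real.exp (-(Real.log p / L)) := by
    have := Real.add_one_le_exp (-(Real.log p / L)); linarith
  have h3 := Real.add_one_le_exp (2 / L * (Real.log p / p))
  have h5 : 1 / p ≤ 1 / 2 := by gcongr
  have h4 : 0 ≤ 1 / p := by positivity
  have hx : 0 ≤ Real.log p / L := div_nonneg (Real.log_nonneg (by linarith)) hL.le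
  have h6 : 2 / L * (Real.log p / p) = 2 * (1 / p) * (Real.log p / L) := by field_simp
  rw [h1]
  rw [h6] at h3 ⊢
  generalize Real.log p / L = x at *
  generalize 1 / p = q at *
  have a1 := mul_le_mul_of_nonneg_left h2 h4
  have a2 := mul_le_mul_of_nonneg_left h3 (by linarith : 0 ≤ 1 - q)
  have a3 : 0 ≤ q * x * (1 - 2 * q) := mul_nonneg (mul_nonneg h4 hx) (by linarith)
  nlinarith

theorem mertens_estimate :
    ∃ c₁ c₂ : ℝ, 0 < c₁ ∧ 0 < c₂ ∧ ∀ n : ℕ, 3 ≤ n →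
      c₁ / Real.log n ≤ ∏ p ∈ (Finset.range n).filter Nat.Prime, (1 - 1 / (p : ℝ)) ∧
      ∏ p ∈ (Finset.range n).filter Nat.Prime, (1 - 1 / (p : ℝ)) ≤ c₂ / Real.log n := by
  refine ⟨Real.exp (-(2 + 2 * Real.log 4)) / 2, 1, by positivity, one_pos, fun n hn => ?_⟩
  change _ ≤ ∏ p ∈ n.primesBelow, (1 - 1 / (p : ℝ)) ∧ ∏ p ∈ n.primesBelow, (1 - 1 / (p : ℝ)) ≤ _
  have hL : 1 ≤ Real.log n := by
    rw [Real.le_log_iff_exp_le (by positivity)]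
    have : (3 : ℝ) ≤ n := by exact_mod_cast hn
    linarith [Real.exp_one_lt_d9]
  have hL0 : 0 < Real.log n := by linarith
  have hp2 : ∀ p ∈ n.primesBelow, (2 : ℝ) ≤ p := fun p hp => by
    exact_mod_cast (Nat.mem_primesBelow.mp hp).2.two_le
  have hpos : 0 < ∏ p ∈ n.primesBelow, (1 - 1 / (p : ℝ)) := by
    refine Finset.prod_pos fun p hp => ?_
    have := hp2 p hp
    rw [sub_pos, div_lt_one] <;> linarith
  constructor
  · have hs : 1 < 1 + 1 / Real.log n := by
      have : 0 < 1 / Real.log n := by positivity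
      linarith
    have he := aux_euler hs n
    rw [Finset.prod_inv_distrib, add_sub_cancel_left, one_div_one_div] at he
    have hterm : ∀ p ∈ n.primesBelow, 0 < 1 - 1 / (p : ℝ) ^ (1 + 1 / Real.log n) := fun p hp => by
      have := hp2 p hp
      have h1 : 1 < (p : ℝ) ^ (1 + 1 / Real.log n) :=
        Real.one_lt_rpow (by linarith) (by linarith)
      rw [sub_pos, div_lt_one] <;> linarith
    have hQ : 0 < ∏ p ∈ n.primesBelow, (1 - 1 / (p : ℝ) ^ (1 + 1 / Real.log n)) :=
      Finset.prod_pos hterm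
    have hle : ∏ p ∈ n.primesBelow, (1 - 1 / (p : ℝ) ^ (1 + 1 / Real.log n)) ≤
        (∏ p ∈ n.primesBelow, (1 - 1 / (p : ℝ))) * Real.exp (2 + 2 * Real.log 4) := by
      refine (Finset.prod_le_prod (fun p hp => (hterm p hp).le)
        fun p hp => aux_term hL0 (hp2 p hp)).trans ?_
      rw [Finset.prod_mul_distrib, ← Real.exp_sum, ← Finset.mul_sum]
      refine mul_le_mul_of_nonneg_left (Real.exp_le_exp.mpr ?_) hpos.le
      have hm := aux_mertens1 n (by omega)
      have h4 : 0 ≤ Real.log 4 := Real.log_nonneg (by norm_num)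
      rw [div_mul_eq_mul_div, div_le_iff₀ hL0]
      nlinarith
    have hQ2 : 1 / (2 * Real.log n) ≤
        ∏ p ∈ n.primesBelow, (1 - 1 / (p : ℝ) ^ (1 + 1 / Real.log n)) := by
      rw [one_div, inv_le_comm₀ (by positivity) hQ]
      linarith
    have hfin := hQ2.trans hle
    rw [← div_le_iff₀ (Real.exp_pos _)] at hfin
    refine le_trans (le_of_eq ?_) hfin
    rw [Real.exp_neg]
    field_simp
  · have h := aux_harm n (by omega)
    rw [Finset.prod_inv_distrib] at h
    rw [one_div]
    exact (le_inv_comm₀ hL0 hpos).mp h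
end
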